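/- Fix a constant κ > 0 and a smooth function α(v). On ℝ³ with coordinates (u,v,x), consider the Brinkmann metric g = dv(2du + F(u,v,x)dv) + dx² with F(u,v,x) = (u²κ)/2 + α(v)(u + 2√(2/κ)·arctanh(tan(x√κ/(2√2)))). Then the scalar curvature of g equals κ, and the function h(u,v,x) = cos(x·√(κ/2)) satisfies the vacuum weighted Einstein field equation h·ρ − Hes_h + (Δh)g = 0 (i.e. with Λ = 0); moreover ∇h = −√(κ/2)·sin(x√(κ/2))·∂_x and ‖∇h‖² = (κ/2)·sin²(x√(κ/2)), so ∇h is spacelike wherever it is nonzero. Hence every positive constant scalar curvature is realized by a solution of the vacuum weighted Einstein field equation with vanishing cosmological constant on a Brinkmann wave. -/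

import Mathlib

noncomputable section
open Matrix

/-- Points of the coordinate space `ℝⁿ`. -/
abbrev Pt (n : ℕ) := Fin n → ℝ

/-- Partial derivative `∂_i f` in the `i`-th coordinate direction. -/
def pd {n : ℕ} (i : Fin n) (f : Pt n → ℝ) (p : Pt n) : ℝ :=
  fderiv ℝ f p (Pi.single i 1)

/-- The inverse metric `g^{ij}` of a metric `g` given as a matrix of components. -/
def ginv {n : ℕ} (g : Pt n → Fin n → Fin n → ℝ) (p : Pt n) : Matrix (Fin n) (Fin n) ℝ :=
  (Matrix.of (g p))⁻¹

/-- Christoffel symbols `Γ^k_{ij}` of the Levi-Civita connection of `g`. -/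
def chr {n : ℕ} (g : Pt n → Fin n → Fin n → ℝ) (k i j : Fin n) (p : Pt n) : ℝ :=
  (1/2) * ∑ l, ginv g p k l *
    (pd i (fun q => g q l j) p + pd j (fun q => g q l i) p - pd l (fun q => g q i j) p)

/-- Components `R_{ij}` of the Ricci tensor of `g`. -/
def RicciT {n : ℕ} (g : Pt n → Fin n → Fin n → ℝ) (i j : Fin n) (p : Pt n) : ℝ :=
  (∑ k, pd k (fun q => chr g k i j q) p) - (∑ k, pd j (fun q => chr g k i k q) p)
  + (∑ k, ∑ l, chr g k k l p * chr g l i j p) - (∑ k, ∑ l, chr g k j l p * chr g l i k p)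

/-- Scalar curvature `τ = g^{ij} R_{ij}` of `g`. -/
def Scal {n : ℕ} (g : Pt n → Fin n → Fin n → ℝ) (p : Pt n) : ℝ :=
  ∑ i, ∑ j, ginv g p i j * RicciT g i j p

/-- Components of the Hessian `Hes_f` of a function `f` with respect to `g`. -/
def Hess {n : ℕ} (g : Pt n → Fin n → Fin n → ℝ) (f : Pt n → ℝ) (i j : Fin n) (p : Pt n) : ℝ :=
  pd i (fun q => pd j f q) p - ∑ k, chr g k i j p * pd k f p

/-- Laplacian `Δf = g^{ij}(Hes_f)_{ij}`. -/
def Lap {n : ℕ} (g : Pt n → Fin n → Fin n → ℝ) (f : Pt n → ℝ) (p : Pt n) : ℝ :=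
  ∑ i, ∑ j, ginv g p i j * Hess g f i j p

/-- Components of the gradient `∇f = g^{ij} ∂_j f ∂_i`. -/
def gradV {n : ℕ} (g : Pt n → Fin n → Fin n → ℝ) (f : Pt n → ℝ) (p : Pt n) (i : Fin n) : ℝ :=
  ∑ j, ginv g p i j * pd j f p

/-- `‖∇f‖² = g(∇f,∇f) = g^{ij} ∂_i f ∂_j f`. -/
def gradNorm2 {n : ℕ} (g : Pt n → Fin n → Fin n → ℝ) (f : Pt n → ℝ) (p : Pt n) : ℝ :=
  ∑ i, ∑ j, ginv g p i j * pd i f p * pd j f p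

/-- The vacuum weighted Einstein field equation
`h·ρ − Hes_h + (Δh + Λ)g = 0` at the point `p`. -/
def WEFEat {n : ℕ} (g : Pt n → Fin n → Fin n → ℝ) (h : Pt n → ℝ) (Λ : ℝ) (p : Pt n) : Prop :=
  ∀ i j, h p * RicciT g i j p - Hess g h i j p + (Lap g h p + Λ) * g p i j = 0

/-- The Ricci operator `Ric = g^{-1}·ρ` as a matrix (column `j` lists the
components of `Ric ∂_j`). -/
def RicOpM {n : ℕ} (g : Pt n → Fin n → Fin n → ℝ) (p : Pt n) : Matrix (Fin n) (Fin n) ℝ :=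
  Matrix.of fun i j => ∑ k, ginv g p i k * RicciT g k j p

/-- The `k`-th component of the covariant derivative `∇_{∂_i} V`. -/
def covD {n : ℕ} (g : Pt n → Fin n → Fin n → ℝ) (V : Pt n → Fin n → ℝ) (i k : Fin n)
    (p : Pt n) : ℝ :=
  pd i (fun q => V q k) p + ∑ m, chr g k i m p * V p m

/-- Components `R^l_{ijk}` of the (1,3)-curvature tensor:
`R(∂_i,∂_j)∂_k = R^l_{ijk} ∂_l`. -/
def RiemUp {n : ℕ} (g : Pt n → Fin n → Fin n → ℝ) (l i j k : Fin n) (p : Pt n) : ℝ :=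
  pd i (fun q => chr g l j k q) p - pd j (fun q => chr g l i k q) p
  + (∑ m, chr g l i m p * chr g m j k p) - (∑ m, chr g l j m p * chr g m i k p)

/-- The (0,4)-curvature tensor `R(∂_i,∂_j,∂_k,∂_l) = g(R(∂_i,∂_j)∂_k, ∂_l)`. -/
def RiemLow {n : ℕ} (g : Pt n → Fin n → Fin n → ℝ) (i j k l : Fin n) (p : Pt n) : ℝ :=
  ∑ m, g p l m * RiemUp g m i j k p

/-- A symmetric matrix of Lorentzian signature `(−,+,+)`. -/
def IsLorentz3 (A : Matrix (Fin 3) (Fin 3) ℝ) : Prop :=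
  A.IsSymm ∧ ∃ P : Matrix (Fin 3) (Fin 3) ℝ, IsUnit P.det ∧
    Pᵀ * A * P = Matrix.diagonal ![(-1 : ℝ), 1, 1]

/-- Jacobian matrix of a coordinate change `ψ`. -/
def jac {n : ℕ} (ψ : Pt n → Pt n) (q : Pt n) : Matrix (Fin n) (Fin n) ℝ :=
  Matrix.of fun i j => pd j (fun r => ψ r i) q

/-- Pullback `ψ^*g` of the metric `g` under the coordinate change `ψ`. -/
def pullback {n : ℕ} (g : Pt n → Fin n → Fin n → ℝ) (ψ : Pt n → Pt n) (q : Pt n) :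
    Matrix (Fin n) (Fin n) ℝ :=
  (jac ψ q)ᵀ * Matrix.of (g (ψ q)) * jac ψ q

/-- The 3-dimensional plane-wave metric `dv(2du − (α''(v)/α(v))x² dv) + dx²`
in coordinates `(u,v,x) = (q 0, q 1, q 2)`. -/
def planeWaveM (α : ℝ → ℝ) (q : Pt 3) : Matrix (Fin 3) (Fin 3) ℝ :=
  Matrix.of fun i j =>
    if i = 0 ∧ j = 1 then 1 else if i = 1 ∧ j = 0 then 1
    else if i = 1 ∧ j = 1 then -(deriv (deriv α) (q 1) / α (q 1)) * (q 2)^2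
    else if i = 2 ∧ j = 2 then 1 else 0


/-- Inverse hyperbolic tangent. -/
def artanh (x : ℝ) : ℝ := (1/2) * Real.log ((1 + x) / (1 - x))

/-- The 3-dimensional Brinkmann metric `dv(2du + F(u,v,x)dv) + dx²` in
coordinates `(u,v,x) = (p 0, p 1, p 2)`. -/
def brinkM (F : Pt 3 → ℝ) (p : Pt 3) : Fin 3 → Fin 3 → ℝ := fun i j =>
  if i = 0 ∧ j = 1 then 1 else if i = 1 ∧ j = 0 then 1
  else if i = 1 ∧ j = 1 then F p
  else if i = 2 ∧ j = 2 then 1 else 0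

/-- The function `F(u,v,x) = u²κ/2 + α(v)(u + 2√(2/κ)·artanh(tan(x√κ/(2√2))))`
of Example 4.3(1). -/
def exF (κ : ℝ) (α : ℝ → ℝ) (p : Pt 3) : ℝ :=
  (p 0)^2 * κ / 2 + α (p 1) *
    (p 0 + 2 * Real.sqrt (2/κ) * artanh (Real.tan (p 2 * Real.sqrt κ / (2 * Real.sqrt 2))))

open Topology Filter

/-- `f` is differentiable at `p` with partial derivatives `a, b, c`. -/
def HP (f : Pt 3 → ℝ) (p : Pt 3) (a b c : ℝ) : Prop :=
  HasFDerivAt f (a • (ContinuousLinearMap.proj (R := ℝ) (φ := fun _ : Fin 3 => ℝ) 0)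
    + b • (ContinuousLinearMap.proj (R := ℝ) (φ := fun _ : Fin 3 => ℝ) 1)
    + c • (ContinuousLinearMap.proj (R := ℝ) (φ := fun _ : Fin 3 => ℝ) 2)) p

theorem HP.pd0 {f : Pt 3 → ℝ} {p : Pt 3} {a b c : ℝ} (h : HP f p a b c) : pd 0 f p = a := by
  unfold pd; rw [HasFDerivAt.fderiv h]; simp

theorem HP.pd1 {f : Pt 3 → ℝ} {p : Pt 3} {a b c : ℝ} (h : HP f p a b c) : pd 1 f p = b := by
  unfold pd; rw [HasFDerivAt.fderiv h]; simp

theorem HP.pd2 {f : Pt 3 → ℝ} {p : Pt 3} {a b c : ℝ} (h : HP f p a b c) : pd 2 f p = c := by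
  unfold pd; rw [HasFDerivAt.fderiv h]; simp

theorem HP.comp0 {φ : ℝ → ℝ} {p : Pt 3} {d : ℝ} (h : HasDerivAt φ d (p 0)) :
    HP (fun q => φ (q 0)) p d 0 0 := by
  have := h.comp_hasFDerivAt p (ContinuousLinearMap.proj (R := ℝ) (φ := fun _ : Fin 3 => ℝ) 0).hasFDerivAt
  exact HasFDerivAt.congr_fderiv this (by ext; simp)

theorem HP.comp1 {φ : ℝ → ℝ} {p : Pt 3} {d : ℝ} (h : HasDerivAt φ d (p 1)) :
    HP (fun q => φ (q 1)) p 0 d 0 := by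
  have := h.comp_hasFDerivAt p (ContinuousLinearMap.proj (R := ℝ) (φ := fun _ : Fin 3 => ℝ) 1).hasFDerivAt
  exact HasFDerivAt.congr_fderiv this (by ext; simp)

theorem HP.comp2 {φ : ℝ → ℝ} {p : Pt 3} {d : ℝ} (h : HasDerivAt φ d (p 2)) :
    HP (fun q => φ (q 2)) p 0 0 d := by
  have := h.comp_hasFDerivAt p (ContinuousLinearMap.proj (R := ℝ) (φ := fun _ : Fin 3 => ℝ) 2).hasFDerivAt
  exact HasFDerivAt.congr_fderiv this (by ext; simp)

theorem HP.add {f g : Pt 3 → ℝ} {p : Pt 3} {a b c a' b' c' : ℝ} (h : HP f p a b c)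
    (h' : HP g p a' b' c') : HP (fun q => f q + g q) p (a + a') (b + b') (c + c') := by
  have := HasFDerivAt.add h h'
  exact HasFDerivAt.congr_fderiv this (by ext; simp; try ring)

theorem HP.mul {f g : Pt 3 → ℝ} {p : Pt 3} {a b c a' b' c' : ℝ} (h : HP f p a b c)
    (h' : HP g p a' b' c') : HP (fun q => f q * g q) p
      (a * g p + f p * a') (b * g p + f p * b') (c * g p + f p * c') := by
  have := HasFDerivAt.mul h h'
  exact HasFDerivAt.congr_fderiv this (by ext; simp; try ring)

theorem HP.cmul {f : Pt 3 → ℝ} {p : Pt 3} {a b c : ℝ} (r : ℝ) (h : HP f p a b c) :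
    HP (fun q => r * f q) p (r * a) (r * b) (r * c) := by
  have := HasFDerivAt.const_mul h r
  exact HasFDerivAt.congr_fderiv this (by ext; simp; try ring)

theorem HP.const (r : ℝ) (p : Pt 3) : HP (fun _ => r) p 0 0 0 := by
  unfold HP; convert hasFDerivAt_const r p using 1; simp

theorem HP.congr {f g : Pt 3 → ℝ} {p : Pt 3} {a b c : ℝ} (h : HP f p a b c)
    (e : g =ᶠ[𝓝 p] f) : HP g p a b c := HasFDerivAt.congr_of_eventuallyEq h e

theorem ginv_brink (F : Pt 3 → ℝ) (p : Pt 3) :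
    ginv (brinkM F) p = !![-F p, 1, 0; 1, 0, 0; 0, 0, 1] := by
  unfold ginv
  apply Matrix.inv_eq_right_inv
  ext i j
  fin_cases i <;> fin_cases j <;> simp [Matrix.mul_apply, Fin.sum_univ_three, brinkM]

theorem pd_const (l : Fin 3) (r : ℝ) (p : Pt 3) : pd l (fun _ => r) p = 0 := by
  simp [pd]

theorem pd_brink (F : Pt 3 → ℝ) (p : Pt 3) (l i j : Fin 3) :
    pd l (fun q => brinkM F q i j) p = if i = 1 ∧ j = 1 then pd l F p else 0 := by
  fin_cases i <;> fin_cases j <;> simp [brinkM, pd_const]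

/-- Table of Christoffel symbols. -/
def chT (f a b c : ℝ) : Fin 3 → Fin 3 → Fin 3 → ℝ :=
  ![![![0, 1/2 * a, 0], ![1/2 * a, 1/2 * (b + f * a), 1/2 * c], ![0, 1/2 * c, 0]],
    ![![0, 0, 0], ![0, -1/2 * a, 0], ![0, 0, 0]],
    ![![0, 0, 0], ![0, -1/2 * c, 0], ![0, 0, 0]]]

theorem chr_brink {F : Pt 3 → ℝ} {p : Pt 3} {a b c : ℝ} (h : HP F p a b c) (k i j : Fin 3) :
    chr (brinkM F) k i j p = chT (F p) a b c k i j := by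
  unfold chr
  simp only [pd_brink, ginv_brink, Fin.sum_univ_three]
  fin_cases k <;> fin_cases i <;> fin_cases j <;>
    simp [chT, h.pd0, h.pd1, h.pd2] <;> ring

theorem pd_chr {F A B C : Pt 3 → ℝ} {p : Pt 3}
    (h : ∀ᶠ q in 𝓝 p, HP F q (A q) (B q) (C q)) (l k i j : Fin 3) :
    pd l (fun q => chr (brinkM F) k i j q) p
      = pd l (fun q => chT (F q) (A q) (B q) (C q) k i j) p := by
  unfold pd
  rw [Filter.EventuallyEq.fderiv_eq]
  filter_upwards [h] with q hq
  exact chr_brink hq k i j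

/-- Table of derivatives of Christoffel symbols. -/
theorem pd_chT {F A B C : Pt 3 → ℝ} {p : Pt 3} {a a' a'' b b' b'' c c' c'' : ℝ}
    (h : HP F p (A p) (B p) (C p)) (hA : HP A p a a' a'') (hB : HP B p b b' b'')
    (hC : HP C p c c' c'') (l k i j : Fin 3) :
    pd l (fun q => chT (F q) (A q) (B q) (C q) k i j) p
      = chT 0 (![a, a', a''] l)
         (![b + (A p * A p + F p * a), b' + (B p * A p + F p * a'),
            b'' + (C p * A p + F p * a'')] l) (![c, c', c''] l) k i j := by
  have h1 := (hB.add (h.mul hA)).cmul (1/2)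
  have h2 := hA.cmul (1/2)
  have h3 := hA.cmul (-1/2)
  have h4 := hC.cmul (1/2)
  have h5 := hC.cmul (-1/2)
  have e0 : ∀ l, pd l (fun q : Pt 3 => (0:ℝ)) p = 0 := fun l => pd_const l 0 p
  fin_cases k <;> fin_cases i <;> fin_cases j <;> simp [chT] <;>
  first
  | exact e0 l
  | (simp only [one_div] at h1 h2 h3 h4 h5
     fin_cases l <;> simp [h1.pd0, h1.pd1, h1.pd2, h2.pd0, h2.pd1, h2.pd2, h3.pd0, h3.pd1, h3.pd2, h4.pd0, h4.pd1, h4.pd2, h5.pd0, h5.pd1, h5.pd2])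

theorem ricci_brink {F A B C : Pt 3 → ℝ} {p : Pt 3} {a a' a'' b b' b'' c c' c'' : ℝ}
    (h : ∀ᶠ q in 𝓝 p, HP F q (A q) (B q) (C q))
    (hA : HP A p a a' a'') (hB : HP B p b b' b'')
    (hC : HP C p c c' c'') (i j : Fin 3) :
    RicciT (brinkM F) i j p =
      (![![0, a/2, 0], ![a/2, (b - a' + F p * a - c'')/2, c/2], ![0, c/2, 0]] :
        Fin 3 → Fin 3 → ℝ) i j := by
  have hp := h.self_of_nhds
  unfold RicciT
  simp only [pd_chr h, pd_chT hp hA hB hC, chr_brink hp]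
  fin_cases i <;> fin_cases j <;> simp [chT, Fin.sum_univ_three] <;> ring

theorem hess_brink {F h h1 : Pt 3 → ℝ} {p : Pt 3} {A B C h2 : ℝ}
    (hF : HP F p A B C) (hh : ∀ q, HP h q 0 0 (h1 q)) (hh1 : HP h1 p 0 0 h2) (i j : Fin 3) :
    Hess (brinkM F) h i j p =
      (![![0, 0, 0], ![0, C * h1 p / 2, 0], ![0, 0, h2]] : Fin 3 → Fin 3 → ℝ) i j := by
  have e0 : (fun q => pd 0 h q) = fun _ => 0 := funext fun q => (hh q).pd0
  have e1 : (fun q => pd 1 h q) = fun _ => 0 := funext fun q => (hh q).pd1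
  have e2 : (fun q => pd 2 h q) = h1 := funext fun q => (hh q).pd2
  unfold Hess
  simp only [chr_brink hF, Fin.sum_univ_three, (hh p).pd0, (hh p).pd1, (hh p).pd2]
  fin_cases i <;> fin_cases j <;>
    simp [chT, e0, e1, e2, pd_const, hh1.pd0, hh1.pd1, hh1.pd2] <;> ring

theorem hasDerivAt_artanh' {t : ℝ} (ht : |t| < 1) : HasDerivAt artanh (1 / (1 - t^2)) t := by
  obtain ⟨h1, h2⟩ := abs_lt.1 ht
  have h3 : 1 - t ≠ 0 := by linarith
  have h4 : 1 + t ≠ 0 := by linarith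
  have h5 : 1 - t^2 ≠ 0 := by
    have : 1 - t^2 = (1 - t) * (1 + t) := by ring
    rw [this]; exact mul_ne_zero h3 h4
  have := ((((hasDerivAt_id t).const_add 1).div ((hasDerivAt_id t).const_sub 1) h3).log
    (div_ne_zero h4 h3)).const_mul (1/2)
  refine HasDerivAt.congr_deriv this ?_
  simp only [id, Pi.div_apply]
  field_simp
  ring

theorem hasDerivAt_G {κ x : ℝ} (hκ : 0 < κ)
    (hc : Real.cos (x * Real.sqrt κ / (2 * Real.sqrt 2)) ≠ 0)
    (ht : |Real.tan (x * Real.sqrt κ / (2 * Real.sqrt 2))| < 1) :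
    Real.cos (x * Real.sqrt (κ/2)) ≠ 0 ∧
    HasDerivAt (fun x => 2 * Real.sqrt (2/κ) *
      artanh (Real.tan (x * Real.sqrt κ / (2 * Real.sqrt 2))))
      (Real.cos (x * Real.sqrt (κ/2)))⁻¹ x := by
  have hs : Real.sqrt κ ≠ 0 := (Real.sqrt_pos.2 hκ).ne'
  have h2 : Real.sqrt 2 ≠ 0 := by positivity
  have hy : x * Real.sqrt (κ/2) = 2 * (x * Real.sqrt κ / (2 * Real.sqrt 2)) := by
    rw [Real.sqrt_div hκ.le]; field_simp
  have hlin : HasDerivAt (fun x : ℝ => x * Real.sqrt κ / (2 * Real.sqrt 2))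
      (1 * Real.sqrt κ / (2 * Real.sqrt 2)) x :=
    ((hasDerivAt_id x).mul_const _).div_const _
  have hd := ((hasDerivAt_artanh' ht).comp x
    ((Real.hasDerivAt_tan hc).comp x hlin)).const_mul (2 * Real.sqrt (2/κ))
  rw [hy]
  generalize x * Real.sqrt κ / (2 * Real.sqrt 2) = y at *
  have hlt : Real.tan y ^ 2 < 1 := by rw [sq_lt_one_iff_abs_lt_one]; exact ht
  have hcs : Real.cos (2 * y) = Real.cos y ^ 2 * (1 - Real.tan y ^ 2) := by
    rw [Real.tan_eq_sin_div_cos, Real.cos_two_mul']; field_simp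
  have h3 : 1 - Real.tan y ^ 2 ≠ 0 := by linarith
  have h0 : Real.cos (2 * y) ≠ 0 := by rw [hcs]; positivity
  refine ⟨h0, HasDerivAt.congr_deriv hd ?_⟩
  rw [hcs, Real.sqrt_div (by norm_num)]
  field_simp

theorem ev_dom {κ : ℝ} {p : Pt 3}
    (hc : Real.cos (p 2 * Real.sqrt κ / (2 * Real.sqrt 2)) ≠ 0)
    (ht : |Real.tan (p 2 * Real.sqrt κ / (2 * Real.sqrt 2))| < 1) :
    ∀ᶠ q : Pt 3 in 𝓝 p, Real.cos (q 2 * Real.sqrt κ / (2 * Real.sqrt 2)) ≠ 0 ∧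
      |Real.tan (q 2 * Real.sqrt κ / (2 * Real.sqrt 2))| < 1 := by
  have hl : ContinuousAt (fun q : Pt 3 => q 2 * Real.sqrt κ / (2 * Real.sqrt 2)) p := by
    exact ((continuous_apply (2 : Fin 3)).continuousAt.mul continuousAt_const).div_const _
  have h1 : ContinuousAt (fun q : Pt 3 => Real.cos (q 2 * Real.sqrt κ / (2 * Real.sqrt 2))) p :=
    Real.continuous_cos.continuousAt.comp hl
  have h2 : ContinuousAt
      (fun q : Pt 3 => |Real.tan (q 2 * Real.sqrt κ / (2 * Real.sqrt 2))|) p :=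
    (ContinuousAt.comp (f := fun q : Pt 3 => q 2 * Real.sqrt κ / (2 * Real.sqrt 2))
      (Real.continuousAt_tan.2 hc) hl).abs
  exact (h1.eventually_ne hc).and (h2.eventually_lt continuousAt_const ht)

/-- For `κ > 0` and smooth `α`, the Brinkmann metric with `F`
as in `exF` has scalar curvature `κ`, and `h = cos(x√(κ/2))` satisfies the
vacuum weighted Einstein field equation with `Λ = 0`; moreover
`∇h = −√(κ/2)·sin(x√(κ/2))·∂_x` and `‖∇h‖² = (κ/2)·sin²(x√(κ/2))`, so `∇h`
is spacelike wherever it is nonzero.  Hence every positive constant scalar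
curvature is realized by such a solution on a Brinkmann wave. -/
theorem brinkmann_positive_scalar_curvature_solutions
    (κ : ℝ) (hκ : 0 < κ) (α : ℝ → ℝ) (hα : ContDiff ℝ (⊤ : ℕ∞) α) :
    ∀ p : Pt 3,
      Real.cos (p 2 * Real.sqrt κ / (2 * Real.sqrt 2)) ≠ 0 →
      |Real.tan (p 2 * Real.sqrt κ / (2 * Real.sqrt 2))| < 1 →
      Scal (brinkM (exF κ α)) p = κ ∧
      WEFEat (brinkM (exF κ α)) (fun q => Real.cos (q 2 * Real.sqrt (κ/2))) 0 p ∧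
      gradV (brinkM (exF κ α)) (fun q => Real.cos (q 2 * Real.sqrt (κ/2))) p =
        (fun i => if i = 2 then
          -(Real.sqrt (κ/2) * Real.sin (p 2 * Real.sqrt (κ/2))) else 0) ∧
      gradNorm2 (brinkM (exF κ α)) (fun q => Real.cos (q 2 * Real.sqrt (κ/2))) p =
        κ / 2 * Real.sin (p 2 * Real.sqrt (κ/2))^2 ∧
      (Real.sin (p 2 * Real.sqrt (κ/2)) ≠ 0 →
        0 < gradNorm2 (brinkM (exF κ α))
          (fun q => Real.cos (q 2 * Real.sqrt (κ/2))) p) := by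
  intro p hc ht
  have hev := ev_dom hc ht
  set c := Real.sqrt (κ/2) with hcdef
  have hcc : c * c = κ / 2 := Real.mul_self_sqrt (by positivity)
  set G : ℝ → ℝ := fun x => 2 * Real.sqrt (2/κ) *
      artanh (Real.tan (x * Real.sqrt κ / (2 * Real.sqrt 2))) with hG
  obtain ⟨hne, hGp⟩ := hasDerivAt_G hκ hc ht
  rw [← hcdef] at hne hGp
  have hα1 : ∀ v, HasDerivAt α (deriv α v) v := fun v =>
    (hα.differentiable (by simp) v).hasDerivAt
  have hα2 : ∀ v, HasDerivAt (deriv α) (deriv (deriv α) v) v := fun v => by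
    have : ContDiff ℝ 1 (deriv α) := by
      have h2 : ContDiff ℝ (1 + 1) α := by
        have h3 : ContDiff ℝ ((2 : ℕ) : WithTop ℕ∞) α := contDiff_infty.1 hα 2
        exact h3.of_le (by norm_num)
      exact (contDiff_succ_iff_deriv.1 h2).2.2
    exact (this.differentiable (by simp) v).hasDerivAt
  have hid : ∀ q : Pt 3, HP (fun q => q 0) q 1 0 0 := fun q => HP.comp0 (hasDerivAt_id (q 0))
  have hFeq : exF κ α = fun q => (κ/2) * (q 0 * q 0) + α (q 1) * (q 0 + G (q 2)) := by
    funext q; simp only [exF, hG]; ring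
  have hF : ∀ᶠ q : Pt 3 in 𝓝 p, HP (exF κ α) q (κ * q 0 + α (q 1))
      (deriv α (q 1) * (q 0 + G (q 2))) (α (q 1) * (Real.cos (q 2 * c))⁻¹) := by
    filter_upwards [hev] with q hq
    rw [hFeq]
    have := (((hid q).mul (hid q)).cmul (κ/2)).add
      ((HP.comp1 (hα1 (q 1))).mul ((hid q).add (HP.comp2 (hasDerivAt_G hκ hq.1 hq.2).2)))
    convert this using 1 <;> ring
  have hA : HP (fun q : Pt 3 => κ * q 0 + α (q 1)) p κ (deriv α (p 1)) 0 := by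
    have := ((hid p).cmul κ).add (HP.comp1 (hα1 (p 1)))
    convert this using 1 <;> ring
  have hB := (HP.comp1 (hα2 (p 1))).mul ((hid p).add (HP.comp2 hGp))
  have hcos : ∀ x, HasDerivAt (fun x : ℝ => Real.cos (x * c)) (-(c * Real.sin (x * c))) x := by
    intro x
    refine ((Real.hasDerivAt_cos (x * c)).comp x
      ((hasDerivAt_id x).mul_const c)).congr_deriv ?_
    ring
  have hsin : ∀ x, HasDerivAt (fun x : ℝ => -(c * Real.sin (x * c)))
      (-(κ / 2 * Real.cos (x * c))) x := by
    intro x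
    refine ((((Real.hasDerivAt_sin (x * c)).comp x
      ((hasDerivAt_id x).mul_const c)).const_mul c).neg).congr_deriv ?_
    rw [← hcc]; ring
  have hC := (HP.comp1 (hα1 (p 1))).mul (HP.comp2 ((hcos (p 2)).inv hne))
  have hh : ∀ q : Pt 3, HP (fun q => Real.cos (q 2 * c)) q 0 0 (-(c * Real.sin (q 2 * c))) :=
    fun q => HP.comp2 (hcos (q 2))
  have hh1 : HP (fun q : Pt 3 => -(c * Real.sin (q 2 * c))) p 0 0 (-(κ / 2 * Real.cos (p 2 * c))) :=
    HP.comp2 (hsin (p 2))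
  have hRic := ricci_brink hF hA hB hC
  have hHess := hess_brink hF.self_of_nhds hh hh1
  have hLap : Lap (brinkM (exF κ α)) (fun q => Real.cos (q 2 * c)) p
      = -(κ / 2 * Real.cos (p 2 * c)) := by
    unfold Lap
    simp only [hHess, ginv_brink, Fin.sum_univ_three]
    simp
  have hgn : gradNorm2 (brinkM (exF κ α)) (fun q => Real.cos (q 2 * c)) p =
        κ / 2 * Real.sin (p 2 * c)^2 := by
    unfold gradNorm2
    simp only [ginv_brink, Fin.sum_univ_three, (hh p).pd0, (hh p).pd1, (hh p).pd2]
    simp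
    rw [← hcc]; ring
  refine ⟨?_, ?_, ?_, hgn, ?_⟩
  · unfold Scal
    simp only [hRic, ginv_brink, Fin.sum_univ_three]
    simp
  · intro i j
    rw [hRic, hHess, hLap]
    fin_cases i <;> fin_cases j <;> simp [brinkM] <;> field_simp <;> ring
  · funext i
    unfold gradV
    simp only [ginv_brink, Fin.sum_univ_three, (hh p).pd0, (hh p).pd1, (hh p).pd2]
    fin_cases i <;> simp
  · intro hs
    rw [hgn]
    positivity
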